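/- J preserves siblings in the Farey tree, hence defines a tree automorphism: for every a = (n_1,…,n_k) ∈ X, whose two children are c_+(a) := (n_1,…,n_{k−1},n_k+1) and c_0(a) := (n_1,…,n_k,1), the unordered pair {J(c_+(a)), J(c_0(a))} equals the unordered pair {c_+(J(a)), c_0(J(a))}. -/

import Mathlib

/-- Finite continued fraction `[0; n₁, …, n_k] = 1/(n₁ + 1/(n₂ + ⋯ + 1/n_k))`,
with the empty tuple giving `0`. -/
def cf : List ℕ → ℚ
  | [] => 0
  | n :: t => 1 / (n + cf t)

/-- `theta (n₁, …, n_k) = [0; n₁, …, n_k, 1]`. -/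
def theta (a : List ℕ) : ℚ := cf (a ++ [1])

/-- Membership in `X`: a nonempty tuple of positive integers. -/
def IsX (a : List ℕ) : Prop := a ≠ [] ∧ ∀ n ∈ a, 0 < n

/-- The monoid operation `⋆` on `X` (concatenation of paths in the Farey tree),
with the zero-elimination rules `(…, m, 0, n, …) = (…, m + n, …)` and a trailing
zero dropped, built into the definition. -/
def star (x y : List ℕ) : List ℕ :=
  match y with
  | [] => x
  | m :: rest =>
    if x.length % 2 = 0 then
      if m = 1 then
        match rest with
        | [] => x
        | m2 :: rest2 => x.dropLast ++ (x.getLastD 0 + m2) :: rest2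
      else x ++ (m - 1) :: rest
    else x.dropLast ++ (x.getLastD 0 + m - 1) :: rest

/-- The involution `K`: `K(1) = (1)`, `K(1, n₂, …, n_k) = (n₂+1, n₃, …, n_k)`,
and `K(n₁, …, n_k) = (1, n₁−1, n₂, …, n_k)` for `n₁ ≥ 2`. -/
def K : List ℕ → List ℕ
  | [] => []
  | [1] => [1]
  | 1 :: n :: rest => (n + 1) :: rest
  | n :: rest => 1 :: (n - 1) :: rest

/-- The Farey map on tuples: `(n₁, …, n_k) ↦ (n₁ − 1, n₂, …, n_k)` if `n₁ ≥ 2`,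
and `(1, n₂, …, n_k) ↦ (n₂, …, n_k)`. -/
def TF : List ℕ → List ℕ
  | [] => []
  | 1 :: rest => rest
  | n :: rest => (n - 1) :: rest

/-- The flipped Farey map (parent map in the Farey tree):
`(n₁, …, n_k) ↦ (n₁, …, n_k − 1)`, a trailing zero being dropped. -/
def TpF (a : List ℕ) : List ℕ := (TF a.reverse).reverse

/-- Auxiliary: continuant computed from the front. -/
def contAux : List ℕ → ℕ
  | [] => 1
  | [n] => n
  | n :: m :: rest => n * contAux (m :: rest) + contAux rest

/-- The continuant `⟨n₁, …, n_k⟩`: `⟨⟩ = 1`, `⟨n₁⟩ = n₁`,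
`⟨n₁, …, n_k⟩ = n_k ⟨n₁, …, n_{k−1}⟩ + ⟨n₁, …, n_{k−2}⟩`. -/
def cont (a : List ℕ) : ℕ := contAux a.reverse

/-- Length of the Farey interval `I(a)`, the interval with endpoints
`[0; n₁, …, n_{k−1}]` and `[0; n₁, …, n_k]`. -/
def ilen (a : List ℕ) : ℚ := |cf a - cf a.dropLast|

/-- Auxiliary for `J`: process the middle entries `n₂, …, n_{k−1}`, keeping the
output built so far in reversed order; an entry `n ≥ 2` contributes the block
`1_{n−2}, 2`, while an entry `n = 1` contributes `1_{−1}, 2`, which is resolved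
by the rule `(…, m, 1_{−1}, 2, …) = (…, m + 1, …)`. -/
def Jmid : List ℕ → List ℕ → List ℕ
  | [], out => out
  | n :: rest, out =>
    if n = 1 then
      Jmid rest (match out with
        | [] => [1]
        | h :: t => (h + 1) :: t)
    else
      Jmid rest (2 :: (List.replicate (n - 2) 1 ++ out))

/-- Dyer's involution `J` (jimm) on tuples: `J(n₁) = 1_{n₁}` and, for `k ≥ 2`,
`J(n₁, …, n_k) = (1_{n₁−1}, 2, 1_{n₂−2}, 2, …, 1_{n_{k−1}−2}, 2, 1_{n_k−1})`,
with `1_0` deleted and `1_{−1}` resolved by `(…, m, 1_{−1}, n, …) = (…, m+n−1, …)`. -/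
def J : List ℕ → List ℕ
  | [] => []
  | [n] => List.replicate n 1
  | n :: rest =>
      (Jmid rest.dropLast (2 :: List.replicate (n - 1) 1)).reverse
        ++ List.replicate (rest.getLastD 1 - 1) 1

/-- The child `(n₁, …, n_{k−1}, n_k + 1)` of a node in the Farey tree. -/
def cplus (a : List ℕ) : List ℕ := a.dropLast ++ [a.getLastD 0 + 1]

/-- The child `(n₁, …, n_k, 1)` of a node in the Farey tree. -/
def czero (a : List ℕ) : List ℕ := a ++ [1]

/-!
Write `a ∈ X` as `(b, l + 1)`. Then `J (b, l + 1) = (P b, 1_l)` for a tuple `P b` not depending on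
`l`, so `l ↦ l + 1` appends a `1`: `J ∘ c₊ = c₀ ∘ J` on `X`. Resolving the block `1_{l-1}, 2` that
`l + 1` contributes once it is an inner entry gives `P (b, l + 1) = c₊ (P b, 1_l)`, so appending a
`1` raises the last entry: `J ∘ c₀ = c₊ ∘ J` on `X`.
-/

/-- The tuple `P b` with `J (b, l + 1) = (P b, 1_l)` for every `l`. It is `(1)` for empty `b`,
since `J (l + 1) = 1_{l+1}`. -/
def Jprefix : List ℕ → List ℕ
  | [] => [1]
  | n :: mid => (Jmid mid (2 :: List.replicate (n - 1) 1)).reverse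

theorem J_append_succ (b : List ℕ) (l : ℕ) :
    J (b ++ [l + 1]) = Jprefix b ++ List.replicate l 1 := by
  cases b with
  | nil => rfl
  | cons n mid =>
    have J_cons_append : J (n :: (mid ++ [l + 1])) =
        (Jmid (mid ++ [l + 1]).dropLast (2 :: List.replicate (n - 1) 1)).reverse
          ++ List.replicate ((mid ++ [l + 1]).getLastD 1 - 1) 1 := by
      cases mid <;> rfl
    simpa [Jprefix] using J_cons_append

theorem Jmid_append (x y out : List ℕ) : Jmid (x ++ y) out = Jmid y (Jmid x out) := by
  induction x generalizing out with
  | nil => rfl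
  | cons n x ih =>
    simp only [List.cons_append, Jmid]
    split_ifs <;> exact ih _

theorem cplus_append_singleton (x : List ℕ) (l : ℕ) : cplus (x ++ [l]) = x ++ [l + 1] := by
  simp [cplus]

theorem reverse_Jmid_singleton_succ (out : List ℕ) (l : ℕ) :
    (Jmid [l + 1] out).reverse = cplus (out.reverse ++ List.replicate l 1) := by
  cases l with
  | zero => cases out <;> simp [Jmid, cplus]
  | succ l =>
    rw [List.replicate_succ', ← List.append_assoc, cplus_append_singleton]
    simp [Jmid]

theorem Jprefix_append_succ (b : List ℕ) (l : ℕ) :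
    Jprefix (b ++ [l + 1]) = cplus (Jprefix b ++ List.replicate l 1) := by
  cases b with
  | nil =>
    calc
      Jprefix [l + 1] = List.replicate l 1 ++ [2] := by simp [Jprefix, Jmid]
      _ = cplus (List.replicate l 1 ++ [1]) := (cplus_append_singleton _ 1).symm
      _ = cplus ([1] ++ List.replicate l 1) := by
        rw [← List.replicate_succ', List.replicate_succ, List.singleton_append]
  | cons n mid =>
    simp only [List.cons_append, Jprefix, Jmid_append, reverse_Jmid_singleton_succ]

theorem J_cplus_append_succ (b : List ℕ) (l : ℕ) :
    J (cplus (b ++ [l + 1])) = czero (J (b ++ [l + 1])) := by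
  simp only [cplus_append_singleton, J_append_succ, czero, List.replicate_succ', List.append_assoc]

theorem J_czero_append_succ (b : List ℕ) (l : ℕ) :
    J (czero (b ++ [l + 1])) = cplus (J (b ++ [l + 1])) :=
  calc
    J (czero (b ++ [l + 1])) = Jprefix (b ++ [l + 1]) := by
      rw [czero, J_append_succ, List.replicate_zero, List.append_nil]
    _ = cplus (J (b ++ [l + 1])) := by rw [Jprefix_append_succ, J_append_succ]

theorem IsX.exists_eq_append_succ {a : List ℕ} (h : IsX a) : ∃ b l, a = b ++ [l + 1] := by
  obtain ⟨ne_nil, pos⟩ := h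
  have last_ne_zero : a.getLast ne_nil ≠ 0 := (pos _ (List.getLast_mem ne_nil)).ne'
  obtain ⟨l, last_eq⟩ := Nat.exists_eq_add_one_of_ne_zero last_ne_zero
  exact ⟨a.dropLast, l, by rw [← last_eq, List.dropLast_append_getLast]⟩

/-- `J` preserves siblings in the Farey tree, hence defines a tree automorphism:
the unordered pair of the `J`-images of the two children of `a` equals the
unordered pair of the two children of `J a`. -/
theorem J_preserves_siblings (a : List ℕ) (h : IsX a) :
    ({J (cplus a), J (czero a)} : Set (List ℕ)) = {cplus (J a), czero (J a)} := by
  obtain ⟨b, l, rfl⟩ := h.exists_eq_append_succ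
  rw [J_cplus_append_succ, J_czero_append_succ, Set.pair_comm]
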